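/- Let γ : ℝ → ℝ² be a smooth regular plane curve parametrised by arc length with curvature κ, which is proper (the preimage of every compact subset of ℝ² is compact), and let V ∈ ℝ² satisfy −κ''(s) = ⟨V, ν(s)⟩ for all s. Suppose lim_{ρ→∞} ( ρ^{-2} ∫_{γ^{-1}(B_ρ(0))} κ(s)² ds + ρ^{-1} ∫_{γ^{-1}(B_{2ρ}(0))} |⟨V, γ'(s)⟩| ds ) = 0, where B_ρ(0) is the closed ball of radius ρ centred at the origin in ℝ². Then γ is a straight line: γ(s) = γ(0) + s γ'(0) for all s. -/

import Mathlib

open Real MeasureTheory Filter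

/-- Euclidean inner product on `ℝ × ℝ`. -/
def innerP (a b : ℝ × ℝ) : ℝ := a.1 * b.1 + a.2 * b.2

/-- Unit normal `ν = (y', -x')` of a plane curve parametrised by arc length. -/
noncomputable def nuA (γ : ℝ → ℝ × ℝ) (s : ℝ) : ℝ × ℝ :=
  ((deriv γ s).2, -(deriv γ s).1)

/-- Curvature `κ = ⟨γ'', ν⟩` of a plane curve parametrised by arc length. -/
noncomputable def curvA (γ : ℝ → ℝ × ℝ) (s : ℝ) : ℝ :=
  innerP (deriv (deriv γ) s) (nuA γ s)

/-- The closed Euclidean ball of radius `ρ` centred at the origin in `ℝ × ℝ`. -/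
def euclBall (ρ : ℝ) : Set (ℝ × ℝ) := {p : ℝ × ℝ | Real.sqrt (p.1 ^ 2 + p.2 ^ 2) ≤ ρ}

theorem innerP_self_nonneg (a : ℝ × ℝ) : 0 ≤ innerP a a := by
  unfold innerP; nlinarith [sq_nonneg a.1, sq_nonneg a.2]

theorem mem_euclBall_iff {R : ℝ} (hR : 0 ≤ R) (p : ℝ × ℝ) :
    p ∈ euclBall R ↔ innerP p p ≤ R ^ 2 := by
  simp only [euclBall, innerP, Set.mem_ofPred_eq, Real.sqrt_le_left hR, ← sq]

theorem isCompact_euclBall (R : ℝ) : IsCompact (euclBall R) := by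
  refine isCompact_Icc.of_isClosed_subset (s := Set.Icc ((-R, -R) : ℝ × ℝ) (R, R)) ?_ ?_
  · exact isClosed_le (by fun_prop) continuous_const
  · intro p hp
    have h1 : |p.1| ≤ R := (Real.abs_le_sqrt (by nlinarith [sq_nonneg p.2])).trans hp
    have h2 : |p.2| ≤ R := (Real.abs_le_sqrt (by nlinarith [sq_nonneg p.1])).trans hp
    rw [abs_le] at h1 h2
    exact ⟨⟨h1.1, h2.1⟩, h1.2, h2.2⟩

theorem innerP_sq_le (a b : ℝ × ℝ) : innerP a b ^ 2 ≤ innerP a a * innerP b b := by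
  unfold innerP; nlinarith [sq_nonneg (a.1 * b.2 - a.2 * b.1)]

theorem HasDerivAt.prod_fst {f : ℝ → ℝ × ℝ} {f' : ℝ × ℝ} {s : ℝ} (hf : HasDerivAt f f' s) :
    HasDerivAt (fun t => (f t).1) f'.1 s := by
  simpa using hf.hasFDerivAt.fst.hasDerivAt

theorem HasDerivAt.prod_snd {f : ℝ → ℝ × ℝ} {f' : ℝ × ℝ} {s : ℝ} (hf : HasDerivAt f f' s) :
    HasDerivAt (fun t => (f t).2) f'.2 s := by
  simpa using hf.hasFDerivAt.snd.hasDerivAt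

theorem HasDerivAt.innerP {f g : ℝ → ℝ × ℝ} {f' g' : ℝ × ℝ} {s : ℝ}
    (hf : HasDerivAt f f' s) (hg : HasDerivAt g g' s) :
    HasDerivAt (fun t => innerP (f t) (g t)) (innerP f' (g s) + innerP (f s) g') s := by
  have h := (hf.prod_fst.mul hg.fst).add (hf.prod_snd.mul hg.snd)
  refine h.congr_deriv ?_
  simp only [_root_.innerP]; ring

theorem hasDerivAt_max_zero_sq (u : ℝ) :
    HasDerivAt (fun t : ℝ => (max t 0) ^ 2) (2 * max u 0) u := by
  rcases lt_trichotomy u 0 with h | h | h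
  · rw [max_eq_right h.le, mul_zero]
    refine (hasDerivAt_const u (0 : ℝ)).congr_of_eventuallyEq ?_
    filter_upwards [eventually_lt_nhds h] with t ht
    simp [max_eq_right ht.le]
  · subst h
    rw [hasDerivAt_iff_isLittleO_nhds_zero]
    have hO : (fun t : ℝ => (max t 0) ^ 2) =O[nhds 0] fun t : ℝ => t ^ 2 := by
      refine Asymptotics.IsBigO.of_bound 1 (Filter.Eventually.of_forall fun t => ?_)
      rw [one_mul, norm_pow, norm_pow]
      gcongr
      rcases le_total t 0 with ht | ht <;> simp [ht]
    have ho := hO.trans_isLittleO (Asymptotics.isLittleO_pow_id (n := 2) one_lt_two)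
    simpa using ho
  · rw [max_eq_left h.le]
    have h2 : HasDerivAt (fun t : ℝ => t ^ 2) (2 * u) u := by simpa using hasDerivAt_pow 2 u
    refine h2.congr_of_eventuallyEq ?_
    filter_upwards [eventually_gt_nhds h] with t ht
    simp [max_eq_left ht.le]

/-- The cutoff `(1 - |γ|² / R²)₊` used to localise to the ball of radius `R`. -/
noncomputable def curveCutoff (γ : ℝ → ℝ × ℝ) (R s : ℝ) : ℝ :=
  max (1 - innerP (γ s) (γ s) / R ^ 2) 0

section UnitSpeed

variable {γ : ℝ → ℝ × ℝ}

theorem contDiff_deriv_curve (hsmooth : ContDiff ℝ (⊤ : ℕ∞) γ) :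
    ContDiff ℝ (⊤ : ℕ∞) (deriv γ) :=
  (contDiff_infty_iff_deriv.1 hsmooth).2

theorem contDiff_curvA (hsmooth : ContDiff ℝ (⊤ : ℕ∞) γ) :
    ContDiff ℝ (⊤ : ℕ∞) (curvA γ) := by
  have h1 := contDiff_deriv_curve hsmooth
  have h2 := contDiff_deriv_curve h1
  unfold curvA nuA innerP
  fun_prop

theorem hasDerivAt_tangent (hsmooth : ContDiff ℝ (⊤ : ℕ∞) γ)
    (hunit : ∀ s, (deriv γ s).1 ^ 2 + (deriv γ s).2 ^ 2 = 1) (s : ℝ) :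
    HasDerivAt (deriv γ) (curvA γ s • nuA γ s) s := by
  have h := ((contDiff_deriv_curve hsmooth).differentiable (by simp) s).hasDerivAt
  have hc : HasDerivAt (fun t => (deriv γ t).1 ^ 2 + (deriv γ t).2 ^ 2) 0 s := by
    simp only [hunit]; exact hasDerivAt_const s 1
  have horth := ((h.prod_fst.pow 2).add (h.prod_snd.pow 2)).unique hc
  refine h.congr_deriv (Prod.ext ?_ ?_) <;>
    simp only [curvA, nuA, innerP, Prod.smul_fst, Prod.smul_snd, smul_eq_mul] at *
  · linear_combination (-(deriv (deriv γ) s).1) * hunit s + (deriv γ s).1 / 2 * horth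
  · linear_combination (-(deriv (deriv γ) s).2) * hunit s + (deriv γ s).2 / 2 * horth

theorem hasDerivAt_normal (hsmooth : ContDiff ℝ (⊤ : ℕ∞) γ)
    (hunit : ∀ s, (deriv γ s).1 ^ 2 + (deriv γ s).2 ^ 2 = 1) (s : ℝ) :
    HasDerivAt (nuA γ) (-(curvA γ s) • deriv γ s) s := by
  have h := hasDerivAt_tangent hsmooth hunit s
  refine (h.prod_snd.prodMk h.prod_fst.neg).congr_deriv ?_
  ext <;> simp [nuA]

/-- A proper unit-speed curve has no nonzero constant curvature: it would be a circle. -/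
theorem curvature_eq_zero_of_const (hsmooth : ContDiff ℝ (⊤ : ℕ∞) γ)
    (hunit : ∀ s, (deriv γ s).1 ^ 2 + (deriv γ s).2 ^ 2 = 1)
    (hproper : ∀ C : Set (ℝ × ℝ), IsCompact C → IsCompact (γ ⁻¹' C))
    {k : ℝ} (hk : ∀ s, curvA γ s = k) : k = 0 := by
  by_contra hne
  have hd : ∀ s, HasDerivAt (fun t => γ t + k⁻¹ • nuA γ t) 0 s := fun s => by
    refine ((hsmooth.differentiable (by simp) s).hasDerivAt.add
      ((hasDerivAt_normal hsmooth hunit s).const_smul k⁻¹)).congr_deriv ?_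
    rw [hk, smul_smul, mul_neg, inv_mul_cancel₀ hne]; simp
  have hconst : ∀ s, γ s + k⁻¹ • nuA γ s = γ 0 + k⁻¹ • nuA γ 0 := fun s =>
    is_const_of_deriv_eq_zero (fun t => (hd t).differentiableAt) (fun t => (hd t).deriv) s 0
  have hbdd : ∀ s, γ s ∈ Metric.closedBall (γ 0 + k⁻¹ • nuA γ 0) |k⁻¹| := fun s => by
    have hν : ‖nuA γ s‖ ≤ 1 := by
      have := hunit s
      refine max_le ?_ ?_ <;> rw [Real.norm_eq_abs] <;>
        refine abs_le_one_iff_mul_self_le_one.2 ?_ <;> simp only [nuA] <;> nlinarith [sq_nonneg (deriv γ s).1, sq_nonneg (deriv γ s).2]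
    rw [← hconst s, mem_closedBall_iff_norm, sub_add_cancel_left, norm_neg, norm_smul,
      Real.norm_eq_abs]
    exact mul_le_of_le_one_right (abs_nonneg _) hν
  have huniv := hproper _ (isCompact_closedBall (γ 0 + k⁻¹ • nuA γ 0) |k⁻¹|)
  rw [Set.eq_univ_of_forall (s := γ ⁻¹' Metric.closedBall _ _) hbdd] at huniv
  exact noncompact_univ ℝ huniv

theorem eq_line_of_curvature_eq_zero (hsmooth : ContDiff ℝ (⊤ : ℕ∞) γ)
    (hunit : ∀ s, (deriv γ s).1 ^ 2 + (deriv γ s).2 ^ 2 = 1)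
    (hk : ∀ s, curvA γ s = 0) (s : ℝ) : γ s = γ 0 + s • deriv γ 0 := by
  have hT : ∀ t, deriv γ t = deriv γ 0 := fun t =>
    is_const_of_deriv_eq_zero
      (fun r => (hasDerivAt_tangent hsmooth hunit r).differentiableAt)
      (fun r => by rw [(hasDerivAt_tangent hsmooth hunit r).deriv, hk, zero_smul]) t 0
  have hd : ∀ t, HasDerivAt (fun r => γ r - r • deriv γ 0) 0 t := fun t => by
    refine ((hsmooth.differentiable (by simp) t).hasDerivAt.sub
      ((hasDerivAt_id t).smul_const (deriv γ 0))).congr_deriv ?_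
    rw [hT t]; simp
  have := is_const_of_deriv_eq_zero (fun t => (hd t).differentiableAt) (fun t => (hd t).deriv) s 0
  simp only [zero_smul, sub_zero] at this
  rw [← this, sub_add_cancel]

theorem hasDerivAt_curveCutoff_sq (hsmooth : ContDiff ℝ (⊤ : ℕ∞) γ) (R s : ℝ) :
    HasDerivAt (fun t => curveCutoff γ R t ^ 2)
      (2 * curveCutoff γ R s * (-(2 * innerP (γ s) (deriv γ s)) / R ^ 2)) s := by
  have hγ := (hsmooth.differentiable (by simp) s).hasDerivAt
  have hu := ((hγ.innerP hγ).div_const (R ^ 2)).const_sub 1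
  refine ((hasDerivAt_max_zero_sq _).comp s hu).congr_deriv ?_
  simp only [curveCutoff, innerP]; ring

/-- Along a translator, the derivative of `⟨V, T⟩ + κ κ_s` is the square of `κ_s`. -/
theorem hasDerivAt_translator_flux (hsmooth : ContDiff ℝ (⊤ : ℕ∞) γ)
    (hunit : ∀ s, (deriv γ s).1 ^ 2 + (deriv γ s).2 ^ 2 = 1) {V : ℝ × ℝ}
    (htrans : ∀ s, -(deriv (deriv (curvA γ)) s) = innerP V (nuA γ s)) (s : ℝ) :
    HasDerivAt (fun t => innerP V (deriv γ t) + curvA γ t * deriv (curvA γ) t)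
      (deriv (curvA γ) s ^ 2) s := by
  have hκ := contDiff_curvA hsmooth
  have hκ1 := (hκ.differentiable (by simp) s).hasDerivAt
  have hκ2 := ((contDiff_infty_iff_deriv.1 hκ).2.differentiable (by simp) s).hasDerivAt
  refine (((hasDerivAt_const s V).innerP (hasDerivAt_tangent hsmooth hunit s)).add
    (hκ1.mul hκ2)).congr_deriv ?_
  have := htrans s
  simp only [innerP, Prod.fst_zero, Prod.snd_zero, Prod.smul_fst, Prod.smul_snd,
    smul_eq_mul] at *
  linear_combination (-curvA γ s) * this

/-- Pointwise absorption for the localised energy identity: `c` is the cutoff, `m` its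
derivative, `w` the derivative of the curvature `k`. -/
theorem absorb_cutoff_terms {R c m v k w : ℝ} (hc0 : 0 ≤ c) (hc1 : c ≤ 1)
    (hm : |m| ≤ 2 / R) :
    w ^ 2 * c ^ 2 / 2 - (4 / R * |v| + 8 / R ^ 2 * k ^ 2)
      ≤ w ^ 2 * c ^ 2 + (v + k * w) * (2 * c * m) := by
  have h1 : |v * (2 * c * m)| ≤ 4 / R * |v| := by
    rw [abs_mul, abs_mul, abs_mul, abs_two, abs_of_nonneg hc0]
    have : c * |m| ≤ 1 * (2 / R) := by gcongr
    have h4 : 4 / R = 2 * (2 / R) := by ring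
    rw [h4]
    nlinarith [abs_nonneg v]
  have h2 : m ^ 2 ≤ 4 / R ^ 2 := by
    have := sq_le_sq' (by linarith [abs_le.1 hm |>.1]) (abs_le.1 hm).2
    calc m ^ 2 ≤ (2 / R) ^ 2 := this
      _ = 4 / R ^ 2 := by ring
  have h3 : 8 / R ^ 2 = 2 * (4 / R ^ 2) := by ring
  rw [h3]
  nlinarith [neg_abs_le (v * (2 * c * m)), sq_nonneg (w * c + 2 * k * m),
    mul_le_mul_of_nonneg_right h2 (sq_nonneg k)]

theorem curveCutoff_nonneg (R s : ℝ) : 0 ≤ curveCutoff γ R s := le_max_right _ _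

theorem curveCutoff_le_one (R s : ℝ) : curveCutoff γ R s ≤ 1 :=
  max_le (sub_le_self _ (div_nonneg (innerP_self_nonneg _) (sq_nonneg R))) zero_le_one

theorem curveCutoff_eq_zero {R s : ℝ} (hR : 0 < R) (h : s ∉ γ ⁻¹' euclBall R) :
    curveCutoff γ R s = 0 := by
  rw [Set.mem_preimage, mem_euclBall_iff hR.le, not_le] at h
  refine max_eq_right ?_
  rw [sub_nonpos, one_le_div (by positivity)]
  exact h.le

theorem abs_position_tangent_le
    (hunit : ∀ s, (deriv γ s).1 ^ 2 + (deriv γ s).2 ^ 2 = 1) {R s : ℝ} (hR : 0 < R)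
    (h : s ∈ γ ⁻¹' euclBall R) :
    |-(2 * innerP (γ s) (deriv γ s)) / R ^ 2| ≤ 2 / R := by
  rw [Set.mem_preimage, mem_euclBall_iff hR.le] at h
  have h1 : innerP (deriv γ s) (deriv γ s) = 1 := by
    have := hunit s
    unfold innerP; linarith
  have h2 := innerP_sq_le (γ s) (deriv γ s)
  rw [h1, mul_one] at h2
  have h3 : |innerP (γ s) (deriv γ s)| ≤ R := abs_le_of_sq_le_sq (h2.trans h) hR.le
  rw [abs_div, abs_neg, abs_mul, abs_two, abs_of_pos (pow_pos hR 2),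
    div_le_div_iff₀ (by positivity) hR]
  nlinarith

/-- The localised energy estimate for the derivative of the curvature of a translator. -/
theorem integral_deriv_curvA_sq_cutoff_le (hsmooth : ContDiff ℝ (⊤ : ℕ∞) γ)
    (hunit : ∀ s, (deriv γ s).1 ^ 2 + (deriv γ s).2 ^ 2 = 1)
    (hproper : ∀ C : Set (ℝ × ℝ), IsCompact C → IsCompact (γ ⁻¹' C)) {V : ℝ × ℝ}
    (htrans : ∀ s, -(deriv (deriv (curvA γ)) s) = innerP V (nuA γ s))
    {R c d : ℝ} (hR : 0 < R) (hcd : c ≤ d) :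
    ∫ s in c..d, deriv (curvA γ) s ^ 2 * curveCutoff γ R s ^ 2 ≤
      16 * (1 / R ^ 2 * (∫ s in γ ⁻¹' euclBall R, curvA γ s ^ 2)
        + 1 / R * ∫ s in γ ⁻¹' euclBall (2 * R), |innerP V (deriv γ s)|) := by
  have hκ := contDiff_curvA hsmooth
  have cκ : Continuous (curvA γ) := hκ.continuous
  have cκ' : Continuous (deriv (curvA γ)) := (contDiff_infty_iff_deriv.1 hκ).2.continuous
  have cγ : Continuous γ := hsmooth.continuous
  have cT : Continuous (deriv γ) := (contDiff_deriv_curve hsmooth).continuous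
  have cv : Continuous fun s => innerP V (deriv γ s) := by unfold innerP; fun_prop
  have cc : Continuous (curveCutoff γ R) := by unfold curveCutoff innerP; fun_prop
  have cp : Continuous fun s => innerP (γ s) (deriv γ s) := by unfold innerP; fun_prop
  have hK := hproper _ (isCompact_euclBall R)
  have hK2 := hproper _ (isCompact_euclBall (2 * R))
  have hKK : γ ⁻¹' euclBall R ⊆ γ ⁻¹' euclBall (2 * R) :=
    Set.preimage_mono fun p (hp : _ ≤ R) => (by linarith : _ ≤ 2 * R)
  obtain ⟨a₀, ha₀⟩ := hK.bddBelow
  obtain ⟨b₀, hb₀⟩ := hK.bddAbove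
  obtain ⟨a, haa, hac⟩ : ∃ a, a < a₀ ∧ a < c :=
    ⟨min a₀ c - 1, by linarith [min_le_left a₀ c], by linarith [min_le_right a₀ c]⟩
  obtain ⟨b, hbb, hdb⟩ : ∃ b, b₀ < b ∧ d < b :=
    ⟨max b₀ d + 1, by linarith [le_max_left b₀ d], by linarith [le_max_right b₀ d]⟩
  have hab : a ≤ b := by linarith
  have hsub : γ ⁻¹' euclBall R ⊆ Set.Ioc a b := fun s hs =>
    ⟨haa.trans_le (ha₀ hs), (hb₀ hs).trans hbb.le⟩
  have ha : curveCutoff γ R a = 0 :=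
    curveCutoff_eq_zero hR fun h => (haa.trans_le (ha₀ h)).false
  have hb : curveCutoff γ R b = 0 :=
    curveCutoff_eq_zero hR fun h => (hbb.trans_le' (hb₀ h)).false
  have hflux : ∫ s in a..b, (deriv (curvA γ) s ^ 2 * curveCutoff γ R s ^ 2 +
      (innerP V (deriv γ s) + curvA γ s * deriv (curvA γ) s) *
        (2 * curveCutoff γ R s * (-(2 * innerP (γ s) (deriv γ s)) / R ^ 2))) = 0 := by
    rw [intervalIntegral.integral_eq_sub_of_hasDerivAt
      (fun s _ => (hasDerivAt_translator_flux hsmooth hunit htrans s).mul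
        (hasDerivAt_curveCutoff_sq hsmooth R s))
      (Continuous.intervalIntegrable (by fun_prop) _ _)]
    simp [ha, hb]
  set g : ℝ → ℝ := fun s => 4 / R * |innerP V (deriv γ s)| + 8 / R ^ 2 * curvA γ s ^ 2 with hg
  have cg : Continuous g := by fun_prop
  have hgi : IntegrableOn g (γ ⁻¹' euclBall R) := cg.continuousOn.integrableOn_compact hK
  have hind : IntervalIntegrable ((γ ⁻¹' euclBall R).indicator g) volume a b :=
    (hgi.integrable_indicator hK.measurableSet).intervalIntegrable
  have hmain : ∫ s in a..b, (deriv (curvA γ) s ^ 2 * curveCutoff γ R s ^ 2 / 2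
      - (γ ⁻¹' euclBall R).indicator g s) ≤ 0 := by
    rw [← hflux]
    refine intervalIntegral.integral_mono_on hab
      ((Continuous.intervalIntegrable (by fun_prop) _ _).sub hind)
      (Continuous.intervalIntegrable (by fun_prop) _ _) fun s _ => ?_
    by_cases hs : s ∈ γ ⁻¹' euclBall R
    · rw [Set.indicator_of_mem hs]
      exact absorb_cutoff_terms (curveCutoff_nonneg R s) (curveCutoff_le_one R s)
        (abs_position_tangent_le hunit hR hs)
    · rw [Set.indicator_of_notMem hs, curveCutoff_eq_zero hR hs]
      simp
  rw [intervalIntegral.integral_sub (Continuous.intervalIntegrable (by fun_prop) _ _) hind,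
    intervalIntegral.integral_div, intervalIntegral.integral_of_le hab (f := Set.indicator _ g),
    setIntegral_indicator hK.measurableSet, Set.inter_eq_self_of_subset_right hsub] at hmain
  have hvi : IntegrableOn (fun s => |innerP V (deriv γ s)|) (γ ⁻¹' euclBall (2 * R)) :=
    cv.abs.continuousOn.integrableOn_compact hK2
  have hki : IntegrableOn (fun s => curvA γ s ^ 2) (γ ⁻¹' euclBall R) :=
    (cκ.pow 2).continuousOn.integrableOn_compact hK
  have hgsplit : ∫ s in γ ⁻¹' euclBall R, g s =
      4 / R * (∫ s in γ ⁻¹' euclBall R, |innerP V (deriv γ s)|)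
        + 8 / R ^ 2 * ∫ s in γ ⁻¹' euclBall R, curvA γ s ^ 2 := by
    rw [hg, integral_add ((hvi.mono_set hKK).const_mul _) (hki.const_mul _),
      integral_const_mul, integral_const_mul]
  have hvmono : ∫ s in γ ⁻¹' euclBall R, |innerP V (deriv γ s)| ≤
      ∫ s in γ ⁻¹' euclBall (2 * R), |innerP V (deriv γ s)| :=
    setIntegral_mono_set hvi (Filter.Eventually.of_forall fun _ => abs_nonneg _)
      (LE.le.eventuallyLE hKK)
  have hv0 : 0 ≤ ∫ s in γ ⁻¹' euclBall (2 * R), |innerP V (deriv γ s)| :=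
    integral_nonneg fun _ => abs_nonneg _
  have hmono : ∫ s in c..d, deriv (curvA γ) s ^ 2 * curveCutoff γ R s ^ 2 ≤
      ∫ s in a..b, deriv (curvA γ) s ^ 2 * curveCutoff γ R s ^ 2 :=
    intervalIntegral.integral_mono_interval hac.le hcd hdb.le
      (Filter.Eventually.of_forall fun _ => by positivity)
      (Continuous.intervalIntegrable (by fun_prop) _ _)
  have hvR := mul_le_mul_of_nonneg_left hvmono (by positivity : 0 ≤ 1 / R)
  have hvR0 := mul_nonneg (by positivity : 0 ≤ 1 / R) hv0
  have e1 : 4 / R = 4 * (1 / R) := by ring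
  have e2 : 8 / R ^ 2 = 8 * (1 / R ^ 2) := by ring
  rw [hgsplit, e1, e2] at hmain
  linarith

/-- The cutoff is eventually at least `1 / 2` on a bounded interval. -/
theorem eventually_half_le_curveCutoff (cγ : Continuous γ) (c d : ℝ) :
    ∀ᶠ R in atTop, ∀ s ∈ Set.Icc c d, 1 / 2 ≤ curveCutoff γ R s := by
  obtain ⟨M, hM⟩ := (isCompact_Icc (a := c) (b := d)).bddAbove_image
    (f := fun s => innerP (γ s) (γ s)) (by unfold innerP; fun_prop)
  filter_upwards [(tendsto_pow_atTop (two_ne_zero)).eventually_ge_atTop (2 * M),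
    eventually_gt_atTop (0 : ℝ)] with R hR hR0 s hs
  refine le_max_of_le_left ?_
  have h1 : innerP (γ s) (γ s) ≤ M := hM ⟨s, hs, rfl⟩
  have h2 : innerP (γ s) (γ s) / R ^ 2 ≤ 1 / 2 := by
    rw [div_le_div_iff₀ (by positivity) two_pos]; linarith
  linarith

end UnitSpeed

/-- a proper open translator for the curve diffusion flow satisfying the
integral growth condition is a straight line. -/
theorem proper_translator_with_growth_is_line
    (γ : ℝ → ℝ × ℝ)
    (hsmooth : ContDiff ℝ (⊤ : ℕ∞) γ)
    (hunit : ∀ s, (deriv γ s).1 ^ 2 + (deriv γ s).2 ^ 2 = 1)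
    (hproper : ∀ C : Set (ℝ × ℝ), IsCompact C → IsCompact (γ ⁻¹' C))
    (V : ℝ × ℝ)
    (htrans : ∀ s, -(deriv (deriv (curvA γ)) s) = innerP V (nuA γ s))
    (hgrowth : Filter.Tendsto (fun ρ : ℝ =>
        (1 / ρ ^ 2) * (∫ s in γ ⁻¹' (euclBall ρ), (curvA γ s) ^ 2)
          + (1 / ρ) * (∫ s in γ ⁻¹' (euclBall (2 * ρ)), |innerP V (deriv γ s)|))
      Filter.atTop (nhds 0)) :
    ∀ s, γ s = γ 0 + s • deriv γ 0 := by
  have hκ := contDiff_curvA hsmooth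
  have cκ' : Continuous (deriv (curvA γ)) := (contDiff_infty_iff_deriv.1 hκ).2.continuous
  have cγ : Continuous γ := hsmooth.continuous
  have hκ' : ∀ s, deriv (curvA γ) s = 0 := by
    intro s₀
    by_contra hne
    have hlt : s₀ - 1 < s₀ + 1 := by linarith
    have hpos : 0 < ∫ s in (s₀ - 1)..(s₀ + 1), deriv (curvA γ) s ^ 2 * (1 / 2) ^ 2 :=
      intervalIntegral.integral_pos hlt (by fun_prop) (fun _ _ => by positivity)
        ⟨s₀, ⟨by linarith, by linarith⟩, by positivity⟩
    refine hpos.not_ge (ge_of_tendsto (mul_zero (16 : ℝ) ▸ hgrowth.const_mul 16) ?_)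
    filter_upwards [eventually_gt_atTop 0, eventually_half_le_curveCutoff cγ (s₀ - 1) (s₀ + 1)]
      with R hR hhalf
    refine le_trans ?_ (integral_deriv_curvA_sq_cutoff_le hsmooth hunit hproper htrans hR hlt.le)
    have cc : Continuous (curveCutoff γ R) := by unfold curveCutoff innerP; fun_prop
    refine intervalIntegral.integral_mono_on hlt.le
      (Continuous.intervalIntegrable (by fun_prop) _ _)
      (Continuous.intervalIntegrable (by fun_prop) _ _) fun s hs => ?_
    have := hhalf s hs
    gcongr
  have hconst : ∀ s, curvA γ s = curvA γ 0 := fun s =>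
    is_const_of_deriv_eq_zero (hκ.differentiable (by simp)) hκ' s 0
  have h0 := curvature_eq_zero_of_const hsmooth hunit hproper hconst
  exact eq_line_of_curvature_eq_zero hsmooth hunit fun s => (hconst s).trans h0
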